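/- Suppose λ_0, …, λ_{ns−1} are pairwise distinct and satisfy the local constraints. Fix a ∈ {0,…,n/(s+1)−1}, b ∈ {0,…,s−1}, and a helper set H ⊆ {0,…,n−1} \ {a(s+1)+b} with |H| = d. If two codewords C = (C_0,…,C_{n−1}) and C′ = (C′_0,…,C′_{n−1}) of the array code satisfy C_j(i) = C′_j(i) for every j ∈ H and every i ∈ {0,…,ℓ−1} whose a-th base-s digit i_a equals b, then C_{a(s+1)+b} = C′_{a(s+1)+b}. In other words, each of the first s nodes of group a can be repaired from any d helper nodes by accessing only the ℓ/s symbols with i_a = b from each helper, achieving the optimal repair bandwidth dℓ/(d−k+1). -/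

import Mathlib

open Matrix

/-- The `u`-th digit of `i` in base `s`. -/
def digit (s i u : ℕ) : ℕ := i / s ^ u % s

open scoped Classical in
/-- The `z`-th entry of the `(i,j)` block (a length-`t` column vector, `0 ≤ z < t`) of the
block matrix `A_{a,b}^{(t)}`; the group size is `g` (`g = s` for the first construction and
`g = s + 1` for the second), so the relevant `λ`-index is `a·s·g + b·s + j_a`. -/
noncomputable def Aent {F : Type*} [Field F] (lam : ℕ → F) (s g a b i j z : ℕ) : F :=
  if i = j then lam (a * s * g + b * s + digit s j a) ^ z
  else if digit s i a = b ∧ digit s j a ≠ b ∧ (∀ u, u ≠ a → digit s i u = digit s j u) then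
    -(lam (a * s * g + b * s + digit s j a) ^ z)
  else 0

/-- `A_{a,b}^{(t)}` as an `ℓt × ℓ` matrix; row `ρ` encodes block row `ρ / t` and
inner row `ρ % t`. -/
noncomputable def Amat {F : Type*} [Field F] (lam : ℕ → F) (s g ℓ a b t : ℕ) :
    Matrix (Fin (ℓ * t)) (Fin ℓ) F :=
  Matrix.of fun ρ j => Aent lam s g a b ((ρ : ℕ) / t) (j : ℕ) ((ρ : ℕ) % t)

/-- The `m`-th smallest element of the finite set `B ⊆ ℕ` (junk value `0` if `m ≥ |B|`). -/
def enum (B : Finset ℕ) (m : ℕ) : ℕ := (B.sort (· ≤ ·)).getD m 0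

/-- `A_{a,B}^{(t)} = [A_{a,b₁}^{(t)} | ⋯ | A_{a,b_v}^{(t)}]` as an `ℓt × ℓ|B|` matrix:
row `ρ` encodes block row `ρ / t` and inner row `ρ % t`; column `κ` selects the
`κ / ℓ`-th member of `B` and inner column `κ % ℓ`. -/
noncomputable def AmatB {F : Type*} [Field F] (lam : ℕ → F) (s g ℓ a t : ℕ) (B : Finset ℕ) :
    Matrix (Fin (ℓ * t)) (Fin (ℓ * B.card)) F :=
  Matrix.of fun ρ κ =>
    Aent lam s g a (enum B ((κ : ℕ) / ℓ)) ((ρ : ℕ) / t) ((κ : ℕ) % ℓ) ((ρ : ℕ) % t)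

/-- The local (in-group) constraints: every square matrix `A_{a,B}` (for a group index
`a < groups` and a nonempty `B ⊆ {0, …, g-1}`) is invertible. -/
def LocalConstraints {F : Type*} [Field F] (lam : ℕ → F) (s g ℓ groups : ℕ) : Prop :=
  ∀ a < groups, ∀ B ⊆ Finset.range g, B.Nonempty → (AmatB lam s g ℓ a B.card B).det ≠ 0

/-- Membership in the array code: `(C_0, …, C_{n−1})` satisfies the parity check equations
`Σ_{a,b} A_{a,b}^{(r)} · C_{a·g+b} = 0` (node `m = a·g + b`). -/
def InCode {F : Type*} [Field F] (lam : ℕ → F) (s g ℓ r n : ℕ) (C : ℕ → ℕ → F) : Prop :=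
  ∀ ρ < ℓ * r, ∑ m ∈ Finset.range n, ∑ j ∈ Finset.range ℓ,
    Aent lam s g (m / g) (m % g) (ρ / r) j (ρ % r) * C m j = 0

/-!
Subtracting, it suffices that a codeword `Y` whose parts `i_a = b` vanish at all helpers vanishes at
the failed node `m₀` of group `a`. Only the rows with `i_a = b` of the parity check equations are
used. Groups other than `a` preserve the digit `i_a`, so there these rows involve only the part
`i_a = b`. In group `a`, the operator of a node other than `m₀` restricts to the scalar `λᶻ` on its
part `i_a = b`, whereas that of `m₀` becomes `±λᶻ` on its `s` parts `i_a = c`, one scalar for each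
`c`. This leaves `s + (n - 1 - d) = r` unknown blocks, as many as there are block rows.

The system is block Vandermonde, with columns `Nᵢ Dᵢᶻ`. Its columns are sorted into the groups other
than `a` and single scalar columns; within a group it is injective by the local constraints, and
operators from different classes commute. The syndromes `∑ Nᵢ Dᵢᶻ xᵢ` of a class with `v` columns
satisfy a linear recurrence of order `v`. Applying this recurrence eliminates the class at the cost
of `v` rows, and it acts injectively on the columns of the other classes because `Dᵢ - Dⱼ` is
injective for `i` and `j` in different classes. Eliminating the classes one by one proves
injectivity.
-/

section Syndrome

variable {R V ι : Type*} [Ring R] [AddCommGroup V] [Module R V]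
  {N D : ι → Module.End R V} {S T : Finset ι}

/-- The `z`-th syndrome `∑ i ∈ S, Nᵢ Dᵢᶻ xᵢ` of a word `x`: one block row of a parity check matrix
whose block in row `z` and column `i` is `Nᵢ Dᵢᶻ`. -/
def syndrome (N D : ι → Module.End R V) (S : Finset ι) (z : ℕ) : (ι → V) →ₗ[R] V :=
  ∑ i ∈ S, (N i * D i ^ z) ∘ₗ LinearMap.proj i

lemma syndrome_apply (z : ℕ) (x : ι → V) :
    syndrome N D S z x = ∑ i ∈ S, N i ((D i ^ z) (x i)) := by
  simp [syndrome, LinearMap.sum_apply]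

lemma syndrome_congr {x y : ι → V} (h : ∀ i ∈ S, x i = y i) (z : ℕ) :
    syndrome N D S z x = syndrome N D S z y := by
  simp only [syndrome_apply]
  exact Finset.sum_congr rfl fun i hi => by rw [h i hi]

lemma syndrome_eq_zero {x : ι → V} (h : ∀ i ∈ S, x i = 0) (z : ℕ) : syndrome N D S z x = 0 :=
  (syndrome_congr (y := 0) h z).trans (map_zero _)

lemma syndrome_pow (z w : ℕ) (x : ι → V) :
    syndrome N D S z (fun i => (D i ^ w) (x i)) = syndrome N D S (z + w) x := by
  simp only [syndrome_apply, pow_add, Module.End.mul_apply]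

lemma syndrome_map_of_commute {T : Module.End R V} (hN : ∀ i ∈ S, Commute T (N i))
    (hD : ∀ i ∈ S, Commute T (D i)) (z : ℕ) (x : ι → V) :
    syndrome N D S z (fun i => T (x i)) = T (syndrome N D S z x) := by
  simp only [syndrome_apply, map_sum]
  refine Finset.sum_congr rfl fun i hi => ?_
  exact (LinearMap.congr_fun ((hN i hi).mul_right ((hD i hi).pow_right z)).eq (x i)).symm

/-- A word supported on `S` is determined by its first `|S|` syndromes, i.e. the square block
matrix `(Nᵢ Dᵢᶻ)`, `z < |S|`, `i ∈ S`, has trivial kernel. -/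
def SyndromeInjective (N D : ι → Module.End R V) (S : Finset ι) : Prop :=
  ∀ x : ι → V, (∀ z < S.card, syndrome N D S z x = 0) → ∀ i ∈ S, x i = 0

lemma syndromeInjective_of_subsingleton (hS : (S : Set ι).Subsingleton)
    (hN : ∀ i ∈ S, Function.Injective (N i)) : SyndromeInjective N D S := by
  intro x hx i hi
  obtain rfl : S = {i} := Finset.eq_singleton_iff_unique_mem.2 ⟨hi, fun j hj => hS hj hi⟩
  refine (map_eq_zero_iff (N i) (hN i hi)).1 ?_
  simpa [syndrome_apply] using hx 0 (by simp)

lemma SyndromeInjective.map {κ : Type*} (e : κ ↪ ι) {B : Finset κ}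
    (h : SyndromeInjective (N ∘ e) (D ∘ e) B) : SyndromeInjective N D (B.map e) := by
  intro x hx i hi
  obtain ⟨q, hq, rfl⟩ := Finset.mem_map.1 hi
  exact h (x ∘ e) (by simpa [syndrome_apply] using hx) q hq

lemma SyndromeInjective.congr {N' D' : ι → Module.End R V} (h : SyndromeInjective N D S)
    (hN : ∀ i ∈ S, N' i = N i) (hD : ∀ i ∈ S, D' i = D i) : SyndromeInjective N' D' S := by
  intro x hx
  refine h x fun z hz => ?_
  rw [← hx z hz, syndrome_apply, syndrome_apply]
  exact Finset.sum_congr rfl fun i hi => by rw [hN i hi, hD i hi]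

section Predictor

variable [IsArtinian R V]

/- An injective endomorphism of the Artinian module `S → V` is surjective. -/
lemma SyndromeInjective.exists_solve (h : SyndromeInjective N D S) :
    ∃ σ : (ℕ → V) →ₗ[R] (ι → V), ∀ y, ∀ z < S.card, syndrome N D S z (σ y) = y z := by
  classical
  let e := S.equivFin
  let extend : (S → V) →ₗ[R] (ι → V) := LinearMap.lsum R (fun _ => V) ℕ
    fun i => LinearMap.single R (fun _ => V) (i : ι)
  have extend_apply (f : S → V) (i : S) : extend f i = f i := by
    simp [extend, Pi.single_apply]
  let L : Module.End R (S → V) := LinearMap.pi fun i => syndrome N D S (e i) ∘ₗ extend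
  have hL : Function.Injective L := by
    refine (injective_iff_map_eq_zero L).2 fun f hf => ?_
    ext ⟨i, hi⟩
    rw [← extend_apply f ⟨i, hi⟩]
    refine h (extend f) (fun z hz => ?_) i hi
    simpa [L] using congrFun hf (e.symm ⟨z, hz⟩)
  let E := LinearEquiv.ofBijective L (IsArtinian.bijective_of_injective_endomorphism L hL)
  refine ⟨extend ∘ₗ E.symm.toLinearMap ∘ₗ LinearMap.funLeft R V fun i => (e i : ℕ), ?_⟩
  intro y z hz
  have hE (f : S → V) (i : S) : E f i = syndrome N D S (e i) (extend f) := rfl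
  have := congrFun (E.apply_symm_apply fun i => y (e i)) (e.symm ⟨z, hz⟩)
  rw [hE, e.apply_symm_apply] at this
  exact this

/-- The word supported on `S` whose first `|S|` syndromes are prescribed by `y`. -/
noncomputable def SyndromeInjective.solve (h : SyndromeInjective N D S) :
    (ℕ → V) →ₗ[R] (ι → V) :=
  h.exists_solve.choose

lemma SyndromeInjective.syndrome_solve (h : SyndromeInjective N D S) (y : ℕ → V) {z : ℕ}
    (hz : z < S.card) : syndrome N D S z (h.solve y) = y z :=
  h.exists_solve.choose_spec y z hz

/-- The linear recurrence satisfied by syndromes: it computes the `|S|`-th syndrome of a word from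
the earlier ones. It reads only the entries of its argument below `|S|`. -/
noncomputable def SyndromeInjective.predictor (h : SyndromeInjective N D S) :
    (ℕ → V) →ₗ[R] V :=
  syndrome N D S S.card ∘ₗ h.solve

lemma SyndromeInjective.predictor_eq (h : SyndromeInjective N D S) {x : ι → V} {y : ℕ → V}
    (hxy : ∀ z < S.card, syndrome N D S z x = y z) :
    h.predictor y = syndrome N D S S.card x := by
  refine syndrome_congr (fun i hi => sub_eq_zero.1 (h (h.solve y - x) (fun z hz => ?_) i hi)) _
  rw [map_sub, h.syndrome_solve y hz, hxy z hz, sub_self]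

lemma SyndromeInjective.predictor_map_of_commute (h : SyndromeInjective N D S)
    {T : Module.End R V} (hN : ∀ i ∈ S, Commute T (N i)) (hD : ∀ i ∈ S, Commute T (D i))
    (y : ℕ → V) : h.predictor (fun z => T (y z)) = T (h.predictor y) := by
  rw [h.predictor_eq (x := fun i => T (h.solve y i)), syndrome_map_of_commute hN hD]
  · rfl
  · intro z hz
    rw [syndrome_map_of_commute hN hD, h.syndrome_solve y hz]

/- If `u` has syndromes `Tᶻ v`, then `Dᵢ uᵢ - T uᵢ` has syndromes `Tᶻ⁺¹ v - T (Tᶻ v) = 0`. -/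
lemma SyndromeInjective.eq_zero_of_predictor_eq (h : SyndromeInjective N D S)
    {T : Module.End R V} (hN : ∀ i ∈ S, Commute T (N i)) (hD : ∀ i ∈ S, Commute T (D i))
    (hT : ∀ i ∈ S, ∀ v, D i v = T v → v = 0) {v : V}
    (hv : h.predictor (fun z => (T ^ z) v) = (T ^ S.card) v) : v = 0 := by
  set u := h.solve fun z => (T ^ z) v
  have hu : ∀ z ≤ S.card, syndrome N D S z u = (T ^ z) v := by
    intro z hz
    rcases hz.lt_or_eq with hlt | rfl
    · exact h.syndrome_solve _ hlt
    · exact hv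
  have hDu : ∀ i ∈ S, D i (u i) - T (u i) = 0 := by
    refine h (fun i => D i (u i) - T (u i)) fun z hz => ?_
    calc syndrome N D S z ((fun i => (D i ^ 1) (u i)) - fun i => T (u i))
        = (T ^ (z + 1)) v - T ((T ^ z) v) := by
          rw [map_sub, syndrome_pow, syndrome_map_of_commute hN hD, hu _ hz, hu _ hz.le]
      _ = 0 := by rw [pow_succ', Module.End.mul_apply, sub_self]
  have hu0 : ∀ i ∈ S, u i = 0 := fun i hi => hT i hi _ (sub_eq_zero.1 (hDu i hi))
  simpa [syndrome_eq_zero hu0] using (hu 0 (Nat.zero_le _)).symm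

/-- The operators at `i` and `j` commute and `Dᵢ - Dⱼ` is injective; this is what makes the blocks
of a block Vandermonde matrix independent of each other. -/
structure Separated (N D : ι → Module.End R V) (i j : ι) : Prop where
  commute_N_N : Commute (N i) (N j)
  commute_N_D : Commute (N i) (D j)
  commute_D_N : Commute (D i) (N j)
  commute_D_D : Commute (D i) (D j)
  eq_zero_of_eq : ∀ v, D i v = D j v → v = 0

/- The recurrence of `S` annihilates the contribution of `S` to the syndromes of `x` and turns the
contribution of `T` into the syndromes of this word. -/
lemma SyndromeInjective.syndrome_pow_sub_predictor (h : SyndromeInjective N D S)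
    (hsep : ∀ i ∈ S, ∀ j ∈ T, Separated N D i j) (x : ι → V) (z : ℕ) :
    syndrome N D T z
        (fun j => (D j ^ S.card) (x j) - h.predictor fun w => (D j ^ w) (x j)) =
      syndrome N D T (z + S.card) x - h.predictor fun w => syndrome N D T (z + w) x := by
  have hpred : ∀ j ∈ T, N j ((D j ^ z) (h.predictor fun w => (D j ^ w) (x j))) =
      h.predictor fun w => N j ((D j ^ (z + w)) (x j)) := by
    intro j hj
    have hN : ∀ i ∈ S, Commute (N j * D j ^ z) (N i) := fun i hi =>
      (hsep i hi j hj).commute_N_N.symm.mul_left ((hsep i hi j hj).commute_N_D.symm.pow_left z)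
    have hD : ∀ i ∈ S, Commute (N j * D j ^ z) (D i) := fun i hi =>
      (hsep i hi j hj).commute_D_N.symm.mul_left ((hsep i hi j hj).commute_D_D.symm.pow_left z)
    simpa only [pow_add, Module.End.mul_apply] using
      (h.predictor_map_of_commute hN hD fun w => (D j ^ w) (x j)).symm
  have hsum : (fun w => syndrome N D T (z + w) x) =
      ∑ j ∈ T, fun w => N j ((D j ^ (z + w)) (x j)) := by
    ext w
    simp only [syndrome_apply, Finset.sum_apply]
  rw [hsum, map_sum, ← Finset.sum_congr rfl hpred, ← syndrome_pow]
  simp only [syndrome_apply, map_sub, Finset.sum_sub_distrib]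

theorem SyndromeInjective.union [DecidableEq ι] (hS : SyndromeInjective N D S)
    (hT : SyndromeInjective N D T) (hST : Disjoint S T)
    (hsep : ∀ i ∈ S, ∀ j ∈ T, Separated N D i j) : SyndromeInjective N D (S ∪ T) := by
  intro x hx
  have hsplit (z : ℕ) :
      syndrome N D (S ∪ T) z x = syndrome N D S z x + syndrome N D T z x := by
    simp only [syndrome_apply, Finset.sum_union hST]
  rw [Finset.card_union_of_disjoint hST] at hx
  have hxT : ∀ j ∈ T, x j = 0 := by
    intro j hj
    refine hS.eq_zero_of_predictor_eq (fun i hi => (hsep i hi j hj).commute_N_D.symm)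
      (fun i hi => (hsep i hi j hj).commute_D_D.symm)
      (fun i hi => (hsep i hi j hj).eq_zero_of_eq) (sub_eq_zero.1 ?_).symm
    refine hT (fun j => (D j ^ S.card) (x j) - hS.predictor fun w => (D j ^ w) (x j))
      (fun z hz => ?_) j hj
    have hneg : ∀ w ≤ S.card,
        syndrome N D S w (fun i => (D i ^ z) ((-x) i)) = syndrome N D T (z + w) x := by
      intro w hw
      rw [syndrome_pow, map_neg, add_comm w z, neg_eq_iff_add_eq_zero, ← hsplit]
      exact hx _ (by omega)
    rw [hS.syndrome_pow_sub_predictor hsep, hS.predictor_eq fun w hw => hneg w hw.le,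
      hneg _ le_rfl, sub_self]
  have hxS : ∀ i ∈ S, x i = 0 := hS x fun z hz => by
    rw [← hx z (by omega), hsplit, syndrome_eq_zero hxT, add_zero]
  intro i hi
  exact (Finset.mem_union.1 hi).elim (hxS i) (hxT i)

theorem syndromeInjective_of_fibers {γ : Type*} [DecidableEq γ] (π : ι → γ)
    (hfiber : ∀ g, SyndromeInjective N D {i ∈ S | π i = g})
    (hsep : ∀ i ∈ S, ∀ j ∈ S, π i ≠ π j → Separated N D i j) : SyndromeInjective N D S := by
  classical
  suffices h : ∀ G : Finset γ, SyndromeInjective N D {i ∈ S | π i ∈ G} by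
    have := h (S.image π)
    rwa [Finset.filter_true_of_mem fun i => Finset.mem_image_of_mem π] at this
  intro G
  induction G using Finset.induction_on with
  | empty => exact syndromeInjective_of_subsingleton (by simp) (by simp)
  | insert g G hg ih =>
    simp only [Finset.mem_insert, Finset.filter_or]
    refine (hfiber g).union ih ?_ ?_
    · refine Finset.disjoint_filter.2 fun i _ hi hiG => hg (hi ▸ hiG)
    · intro i hi j hj
      rw [Finset.mem_filter] at hi hj
      exact hsep i hi.1 j hj.1 fun hij => hg (by rw [← hi.2, hij]; exact hj.2)

end Predictor

end Syndrome

section DigitAct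

variable {R κ α : Type*} [CommRing R] [DecidableEq κ]

/-- Freezes the digit at position `p` to the value `c`. -/
def restrictDigit (p : κ) (c : α) : Module.End R ((κ → α) → R) :=
  LinearMap.funLeft R R fun f => Function.update f p c

lemma restrictDigit_apply (p : κ) (c : α) (y : (κ → α) → R) (f : κ → α) :
    restrictDigit p c y f = y (Function.update f p c) := rfl

variable [Fintype α] [DecidableEq α]

/-- The operator `I ⊗ A ⊗ I` on functions of digit strings `κ → α`, where the matrix `A` acts on the
digit at position `p`. -/
def digitAct (p : κ) : Matrix α α R →ₐ[R] Module.End R ((κ → α) → R) :=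
  AlgHom.ofLinearMap
    { toFun := fun A =>
        { toFun := fun y f => ∑ c, A (f p) c * y (Function.update f p c)
          map_add' := fun y y' => by ext f; simp [mul_add, Finset.sum_add_distrib]
          map_smul' := fun k y => by ext f; simp [Finset.mul_sum, mul_left_comm] }
      map_add' := fun A B => by ext y f; simp [add_mul, Finset.sum_add_distrib]
      map_smul' := fun k A => by ext y f; simp [Finset.mul_sum, mul_assoc] }
    (by ext y f; simp [Matrix.one_apply])
    (fun A B => by
      refine LinearMap.ext fun y => funext fun f => ?_
      simp only [LinearMap.coe_mk, AddHom.coe_mk, Module.End.mul_apply, Matrix.mul_apply,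
        Function.update_self, Function.update_idem, Finset.sum_mul, Finset.mul_sum, mul_assoc]
      exact Finset.sum_comm)

lemma digitAct_apply (p : κ) (A : Matrix α α R) (y : (κ → α) → R) (f : κ → α) :
    digitAct p A y f = ∑ c, A (f p) c * y (Function.update f p c) := rfl

lemma digitAct_diagonal_apply (p : κ) (d : α → R) (y : (κ → α) → R) (f : κ → α) :
    digitAct p (Matrix.diagonal d) y f = d (f p) * y f := by
  simp [digitAct_apply, Matrix.diagonal_apply]

lemma commute_digitAct {p p' : κ} (hp : p ≠ p') (A B : Matrix α α R) :
    Commute (digitAct p A) (digitAct p' B) := by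
  refine LinearMap.ext fun y => funext fun f => ?_
  simp only [Module.End.mul_apply, digitAct_apply, Function.update_of_ne hp,
    Function.update_of_ne hp.symm, Finset.mul_sum]
  rw [Finset.sum_comm]
  simp only [Function.update_comm hp, mul_left_comm]

lemma sum_ite_eq_digitAct [Fintype κ] (p : κ) (A : Matrix α α R) (y : (κ → α) → R) (f : κ → α) :
    ∑ h, (if ∀ u, u ≠ p → f u = h u then A (f p) (h p) else 0) * y h = digitAct p A y f := by
  rw [digitAct_apply]
  refine (Finset.sum_of_injOn (Function.update f p) (Function.update_injective f p).injOn
    (by simp) (fun h _ hh => ?_) fun c _ => ?_).symm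
  · rw [if_neg, zero_mul]
    refine fun hoff => hh ⟨h p, by simp, ?_⟩
    exact Function.update_eq_iff.2 ⟨rfl, hoff⟩
  · rw [if_pos fun u hu => (Function.update_of_ne hu c f).symm, Function.update_self]

lemma restrictDigit_digitAct_of_ne {p p' : κ} (hp : p' ≠ p) (c : α) (A : Matrix α α R)
    (y : (κ → α) → R) :
    restrictDigit p c (digitAct p' A y) = digitAct p' A (restrictDigit p c y) := by
  ext f
  simp only [restrictDigit_apply, digitAct_apply, Function.update_of_ne hp,
    Function.update_comm hp]

lemma restrictDigit_digitAct_self (p : κ) (c : α) (A : Matrix α α R) (y : (κ → α) → R) :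
    restrictDigit p c (digitAct p A y) = ∑ e, A c e • restrictDigit p e y := by
  ext f
  simp [restrictDigit_apply, digitAct_apply]

end DigitAct

section Code

variable {R : Type*} [CommRing R] {M g s : ℕ}

/-- The signs of the kernel matrix `K_{a,q}`. -/
def signMatrix (R : Type*) [CommRing R] (s q : ℕ) : Matrix (Fin s) (Fin s) R :=
  Matrix.of fun i j => if i = j then 1 else if (i : ℕ) = q then -1 else 0

/-- The sign part of the block of the parity check matrix at node `(p, q)`, the `q`-th node of
group `p`. Entries of a node are indexed by their digit strings `Fin M → Fin s`. -/
def nodeSign (R : Type*) [CommRing R] (s : ℕ) (m : Fin M × Fin g) :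
    Module.End R ((Fin M → Fin s) → R) :=
  digitAct m.1 (signMatrix R s m.2)

/-- The diagonal part of the block of the parity check matrix at node `m`, whose `z`-th power gives
the `z`-th block row; `μ m c` is the element `λ` attached to node `m` and digit `c`. -/
def nodeEval (μ : Fin M × Fin g → Fin s → R) (m : Fin M × Fin g) :
    Module.End R ((Fin M → Fin s) → R) :=
  digitAct m.1 (Matrix.diagonal (μ m))

lemma nodeSign_nodeEval_pow (μ : Fin M × Fin g → Fin s → R) (m : Fin M × Fin g) (z : ℕ)
    (y : (Fin M → Fin s) → R) :
    nodeSign R s m ((nodeEval μ m ^ z) y) =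
      digitAct m.1 (signMatrix R s m.2 * Matrix.diagonal (μ m) ^ z) y := by
  rw [map_mul, map_pow]
  rfl

end Code

section Repair

variable {R : Type*} [CommRing R] {M g s : ℕ} (μ : Fin M × Fin g → Fin s → R)
  (a : Fin M) (b : Fin s)

/-- An unknown of the parity check equations restricted to the rows with `a`-th digit `b`: the
part `i_a = c` of node `m` is indexed by `⟨m, c⟩`. -/
abbrev RepairIndex (M g s : ℕ) : Type := (_ : Fin M × Fin g) × Fin s

/-- The sign part of the restricted parity check matrix. In group `a` only the row `b` of the sign
matrix survives, and each of its entries multiplies its own unknown. -/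
def repairSign (R : Type*) [CommRing R] (i : RepairIndex M g s) :
    Module.End R ((Fin M → Fin s) → R) :=
  digitAct i.1.1
    (if i.1.1 = a then signMatrix R s i.1.2 b i.2 • 1 else signMatrix R s i.1.2)

/-- The diagonal part of the restricted parity check matrix; in group `a` it is scalar. -/
def repairEval (i : RepairIndex M g s) : Module.End R ((Fin M → Fin s) → R) :=
  digitAct i.1.1 (Matrix.diagonal fun e => μ i.1 (if i.1.1 = a then i.2 else e))

/-- The unknowns that occur for node `m` when node `m₀` is repaired: the failed node contributes all
of its parts, the others only the part `i_a = b`. -/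
def repairDigits (m₀ m : Fin M × Fin g) : Finset (Fin s) := if m = m₀ then Finset.univ else {b}

lemma repairSign_repairEval_pow (i : RepairIndex M g s) (hi : i.1.1 = a) (z : ℕ)
    (y : (Fin M → Fin s) → R) : repairSign a b R i ((repairEval μ a i ^ z) y) =
      (signMatrix R s i.1.2 * Matrix.diagonal (μ i.1) ^ z) b i.2 • y := by
  ext f
  simp [repairSign, repairEval, hi, ← map_pow, Matrix.diagonal_pow, digitAct_diagonal_apply,
    Matrix.mul_diagonal, mul_assoc]

lemma restrictDigit_node {m₀ : Fin M × Fin g} (hm₀ : m₀.1 = a) (hm₀b : (m₀.2 : ℕ) = b)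
    (m : Fin M × Fin g) (z : ℕ) (y : (Fin M → Fin s) → R) :
    restrictDigit a b (nodeSign R s m ((nodeEval μ m ^ z) y)) =
      ∑ c ∈ repairDigits b m₀ m,
        repairSign a b R ⟨m, c⟩ ((repairEval μ a ⟨m, c⟩ ^ z) (restrictDigit a c y)) := by
  rw [nodeSign_nodeEval_pow]
  by_cases hma : m.1 = a
  · rw [hma, restrictDigit_digitAct_self]
    simp only [repairSign_repairEval_pow μ a b ⟨m, _⟩ hma]
    refine (Finset.sum_subset (Finset.subset_univ _) fun c _ hc => ?_).symm
    have hm : m ≠ m₀ := by rintro rfl; simp [repairDigits] at hc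
    have hcb : b ≠ c := by rintro rfl; simp [repairDigits, hm] at hc
    have hmb : (b : ℕ) ≠ m.2 := fun h =>
      hm (Prod.ext (hma.trans hm₀.symm) (Fin.ext (h.symm.trans hm₀b.symm)))
    simp [signMatrix, Matrix.diagonal_pow, Matrix.mul_diagonal, hcb, hmb]
  · have hm : m ≠ m₀ := by rintro rfl; exact hma hm₀
    rw [restrictDigit_digitAct_of_ne hma, repairDigits, if_neg hm, Finset.sum_singleton]
    simp [repairSign, repairEval, hma]

/-- The unknowns left when node `m₀` is repaired from the nodes in `H`. -/
def repairUnknowns (m₀ : Fin M × Fin g) (H : Finset (Fin M × Fin g)) :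
    Finset (RepairIndex M g s) :=
  Hᶜ.sigma (repairDigits b m₀)

lemma mem_repairUnknowns {m₀ : Fin M × Fin g} {H : Finset (Fin M × Fin g)}
    {i : RepairIndex M g s} :
    i ∈ repairUnknowns b m₀ H ↔ i.1 ∉ H ∧ (i.1 = m₀ ∨ i.2 = b) := by
  by_cases h : i.1 = m₀ <;> simp [repairUnknowns, repairDigits, h]

lemma card_repairUnknowns {m₀ : Fin M × Fin g} {H : Finset (Fin M × Fin g)} (hm₀ : m₀ ∉ H) :
    (repairUnknowns b m₀ H).card + H.card + 1 = M * g + s := by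
  have hcompl := Finset.card_add_card_compl H
  have hother : ∀ m ∈ Hᶜ.erase m₀, (repairDigits b m₀ m).card = 1 := fun m hm => by
    rw [repairDigits, if_neg (Finset.ne_of_mem_erase hm), Finset.card_singleton]
  have hmem : m₀ ∈ Hᶜ := Finset.mem_compl.2 hm₀
  have hpos := Finset.card_pos.2 ⟨m₀, hmem⟩
  rw [repairUnknowns, Finset.card_sigma, ← Finset.add_sum_erase _ _ hmem,
    Finset.sum_congr rfl hother, repairDigits, if_pos rfl, Finset.sum_const,
    Finset.card_erase_of_mem hmem]
  simp only [Finset.card_univ, Fintype.card_fin, Fintype.card_prod, smul_eq_mul] at hcompl ⊢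
  omega

theorem syndrome_repair {m₀ : Fin M × Fin g} (hm₀ : m₀.1 = a) (hm₀b : (m₀.2 : ℕ) = b)
    {H : Finset (Fin M × Fin g)} (hmH : m₀ ∉ H) {Y : Fin M × Fin g → (Fin M → Fin s) → R}
    (hY : ∀ m ∈ H, restrictDigit a b (Y m) = 0) (z : ℕ) :
    syndrome (repairSign a b R) (repairEval μ a) (repairUnknowns b m₀ H) z
        (fun i => restrictDigit a i.2 (Y i.1)) =
      restrictDigit a b (syndrome (nodeSign R s) (nodeEval μ) Finset.univ z Y) := by
  simp only [syndrome_apply, map_sum, restrictDigit_node μ a b hm₀ hm₀b, repairUnknowns,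
    Finset.sum_sigma]
  refine Finset.sum_subset (Finset.subset_univ _) fun m _ hm => ?_
  have hmH' : m ∈ H := by simpa using hm
  rw [repairDigits, if_neg (ne_of_mem_of_not_mem hmH' hmH), Finset.sum_singleton, hY m hmH']
  simp

/-- The block of an unknown: unknowns of group `a` are blocks of their own, the others are grouped
as in the code. -/
def repairBlock (i : RepairIndex M g s) : RepairIndex M g s ⊕ Fin M :=
  if i.1.1 = a then Sum.inl i else Sum.inr i.1.1

lemma repairBlock_eq_inl {i j : RepairIndex M g s} :
    repairBlock a i = Sum.inl j ↔ i.1.1 = a ∧ i = j := by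
  by_cases h : i.1.1 = a <;> simp [repairBlock, h]

lemma repairBlock_eq_inr {i : RepairIndex M g s} {p : Fin M} :
    repairBlock a i = Sum.inr p ↔ i.1.1 ≠ a ∧ i.1.1 = p := by
  by_cases h : i.1.1 = a <;> simp [repairBlock, h]

lemma repairSign_of_eq {i : RepairIndex M g s} (hi : i.1.1 = a) :
    repairSign a b R i = signMatrix R s i.1.2 b i.2 • 1 := by
  rw [repairSign, if_pos hi, map_smul, map_one]

lemma repairEval_of_eq {i : RepairIndex M g s} (hi : i.1.1 = a) :
    repairEval μ a i = μ i.1 i.2 • 1 := by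
  rw [← map_one (digitAct i.1.1), ← map_smul, Matrix.smul_one_eq_diagonal]
  simp only [repairEval, hi, if_true]

lemma repairEval_eq_zero_of_eq [IsDomain R] (hμ : Function.Injective (Function.uncurry μ))
    {i j : RepairIndex M g s} (hij : repairBlock a i ≠ repairBlock a j)
    {v : (Fin M → Fin s) → R} (hv : repairEval μ a i v = repairEval μ a j v) : v = 0 := by
  have hpair (m m' c c') (h : μ m c = μ m' c') : m = m' ∧ c = c' :=
    Prod.ext_iff.1 (@hμ (m, c) (m', c') h)
  ext f
  have hf := congrFun hv f
  simp only [repairEval, digitAct_diagonal_apply] at hf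
  refine (mul_eq_mul_right_iff.1 hf).resolve_left fun hμij => hij ?_
  obtain ⟨hnode, hdigit⟩ := hpair _ _ _ _ hμij
  by_cases hi : i.1.1 = a
  · have hj : j.1.1 = a := hnode ▸ hi
    refine congrArg (repairBlock a) (Sigma.ext hnode (heq_of_eq ?_))
    simpa only [hi, hj, if_true] using hdigit
  · simp only [repairBlock, ← hnode, hi, if_false]

lemma separated_repair [IsDomain R] (hμ : Function.Injective (Function.uncurry μ))
    {i j : RepairIndex M g s} (hij : repairBlock a i ≠ repairBlock a j) :
    Separated (repairSign a b R) (repairEval μ a) i j := by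
  have heq : ∀ v, repairEval μ a i v = repairEval μ a j v → v = 0 := fun v =>
    repairEval_eq_zero_of_eq μ a hμ hij
  by_cases hp : i.1.1 = j.1.1
  · have hi : i.1.1 = a := by
      by_contra hi
      exact hij (by simp [repairBlock, ← hp, hi])
    constructor
    case eq_zero_of_eq => exact heq
    all_goals
      simp only [repairSign_of_eq a b hi, repairEval_of_eq μ a hi]
      exact (Commute.one_left _).smul_left _
  · exact ⟨commute_digitAct hp _ _, commute_digitAct hp _ _, commute_digitAct hp _ _,
      commute_digitAct hp _ _, heq⟩

end Repair

section RepairField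

variable {F : Type*} [Field F] {M g s : ℕ} (μ : Fin M × Fin g → Fin s → F)
  {a : Fin M} {b : Fin s}

lemma injective_repairSign {m₀ : Fin M × Fin g} (hm₀b : (m₀.2 : ℕ) = b)
    {H : Finset (Fin M × Fin g)} {i : RepairIndex M g s} (hi : i ∈ repairUnknowns b m₀ H)
    (hia : i.1.1 = a) : Function.Injective (repairSign a b F i) := by
  have hsign : signMatrix F s i.1.2 b i.2 ≠ 0 := by
    rcases ((mem_repairUnknowns b).1 hi).2 with him | hib
    · by_cases hb : b = i.2 <;> simp [signMatrix, him, hm₀b, hb]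
    · simp [signMatrix, hib]
  rw [repairSign_of_eq a b hia]
  exact smul_right_injective _ hsign

theorem syndromeInjective_repair (hμ : Function.Injective (Function.uncurry μ))
    (hlocal : ∀ p, ∀ B : Finset (Fin g), SyndromeInjective
      (fun q => nodeSign F s (p, q)) (fun q => nodeEval μ (p, q)) B)
    {m₀ : Fin M × Fin g} (hm₀ : m₀.1 = a) (hm₀b : (m₀.2 : ℕ) = b)
    (H : Finset (Fin M × Fin g)) :
    SyndromeInjective (repairSign a b F) (repairEval μ a) (repairUnknowns b m₀ H) := by
  refine syndromeInjective_of_fibers (repairBlock a) ?_ fun i _ j _ => separated_repair μ a b hμ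
  rintro (i₀ | p)
  · have hfiber : ∀ i ∈ ({i ∈ repairUnknowns b m₀ H | repairBlock a i = Sum.inl i₀} : Finset _),
        i ∈ repairUnknowns b m₀ H ∧ i.1.1 = a ∧ i = i₀ := by
      simp [repairBlock_eq_inl]
    exact syndromeInjective_of_subsingleton
      (fun i hi j hj => (hfiber i hi).2.2.trans (hfiber j hj).2.2.symm)
      fun i hi => injective_repairSign hm₀b (hfiber i hi).1 (hfiber i hi).2.1
  · let e : Fin g ↪ RepairIndex M g s := ⟨fun q => ⟨(p, q), b⟩, fun q q' h => by simpa using h⟩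
    have hfiber : ({i ∈ repairUnknowns b m₀ H | repairBlock a i = Sum.inr p} : Finset _) =
        ({q | p ≠ a ∧ (p, q) ∉ H} : Finset (Fin g)).map e := by
      ext i
      rw [Finset.mem_filter, mem_repairUnknowns, repairBlock_eq_inr, Finset.mem_map]
      constructor
      · rintro ⟨⟨hiH, him⟩, hia, rfl⟩
        have hib : i.2 = b := him.resolve_left fun him => hia (him ▸ hm₀)
        exact ⟨i.1.2, by simp [hia, hiH], Sigma.ext rfl (heq_of_eq hib.symm)⟩
      · rintro ⟨q, hq, rfl⟩
        obtain ⟨hpa, hqH⟩ := (Finset.mem_filter.1 hq).2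
        exact ⟨⟨hqH, Or.inr rfl⟩, hpa, rfl⟩
    rw [hfiber]
    refine ((hlocal p _).congr (fun q hq => ?_) fun q hq => ?_).map e
    all_goals have hpa : p ≠ a := (Finset.mem_filter.1 hq).2.1
    · change digitAct p (if p = a then _ else _) = _
      rw [if_neg hpa]
      rfl
    · change digitAct p (Matrix.diagonal fun c => μ (p, q) (if p = a then b else c)) = _
      simp only [if_neg hpa, nodeEval]

theorem eq_zero_of_restrictDigit_eq_zero (hμ : Function.Injective (Function.uncurry μ))
    (hlocal : ∀ p, ∀ B : Finset (Fin g), SyndromeInjective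
      (fun q => nodeSign F s (p, q)) (fun q => nodeEval μ (p, q)) B)
    {m₀ : Fin M × Fin g} (hm₀b : (m₀.2 : ℕ) = b)
    {H : Finset (Fin M × Fin g)} (hm₀H : m₀ ∉ H) {r : ℕ} (hr : M * g + s ≤ r + H.card + 1)
    {Y : Fin M × Fin g → (Fin M → Fin s) → F}
    (hcode : ∀ z < r, syndrome (nodeSign F s) (nodeEval μ) Finset.univ z Y = 0)
    (hY : ∀ m ∈ H, restrictDigit m₀.1 b (Y m) = 0) : Y m₀ = 0 := by
  have hcard := card_repairUnknowns b hm₀H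
  have hinj := syndromeInjective_repair (a := m₀.1) μ hμ hlocal rfl hm₀b H
  have hzero := hinj (fun i => restrictDigit m₀.1 i.2 (Y i.1)) fun z hz => by
    rw [syndrome_repair μ m₀.1 b rfl hm₀b hm₀H hY, hcode z (by omega), map_zero]
  ext f
  simpa [restrictDigit_apply] using
    congrFun (hzero ⟨m₀, f m₀.1⟩ ((mem_repairUnknowns b).2 ⟨hm₀H, Or.inl rfl⟩)) f

end RepairField

section Encoding

lemma finProdFinEquiv_div {m n : ℕ} (x : Fin m × Fin n) : (finProdFinEquiv x : ℕ) / n = x.1 :=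
  congrArg (fun y => (y.1 : ℕ)) (finProdFinEquiv.symm_apply_apply x)

lemma finProdFinEquiv_mod {m n : ℕ} (x : Fin m × Fin n) : (finProdFinEquiv x : ℕ) % n = x.2 :=
  congrArg (fun y => (y.2 : ℕ)) (finProdFinEquiv.symm_apply_apply x)

lemma enum_map_valEmbedding {g v : ℕ} (B : Finset (Fin g)) (hv : B.card = v) (m : Fin v) :
    enum (B.map Fin.valEmbedding) m = B.orderEmbOfFin hv m := by
  have hcard : (B.map Fin.valEmbedding).card = v := by rw [Finset.card_map, hv]
  have hunique := Finset.orderEmbOfFin_unique hcard (f := fun m => (B.orderEmbOfFin hv m : ℕ))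
    (fun m => Finset.mem_map_of_mem _ (B.orderEmbOfFin_mem hv m))
    (Fin.val_strictMono.comp (B.orderEmbOfFin hv).strictMono)
  rw [congrFun hunique m, Finset.orderEmbOfFin_apply]
  exact List.getD_eq_getElem _ _ _

variable {M s : ℕ}

lemma digit_finFunctionFinEquiv (f : Fin M → Fin s) (u : Fin M) :
    digit s (finFunctionFinEquiv f) u = f u := by
  rw [digit, ← finFunctionFinEquiv_symm_apply_val, Equiv.symm_apply_apply]

lemma digit_eq_zero {i u : ℕ} (hi : i < s ^ M) (hu : M ≤ u) : digit s i u = 0 := by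
  rcases s.eq_zero_or_pos with rfl | hs
  · obtain rfl : M = 0 := by
      by_contra hM
      simp [hM] at hi
    simp [digit, Nat.lt_one_iff.1 hi]
  · rw [digit, Nat.div_eq_of_lt (hi.trans_le (Nat.pow_le_pow_right hs hu)), Nat.zero_mod]

lemma digit_finFunctionFinEquiv_eq_off (p : Fin M) (f h : Fin M → Fin s) :
    (∀ u, u ≠ (p : ℕ) →
      digit s (finFunctionFinEquiv f) u = digit s (finFunctionFinEquiv h) u) ↔
    ∀ u, u ≠ p → f u = h u := by
  constructor
  · intro hoff u hu
    have := hoff u (Fin.val_ne_of_ne hu)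
    rwa [digit_finFunctionFinEquiv, digit_finFunctionFinEquiv, Fin.val_inj] at this
  · intro hoff u hu
    by_cases huM : u < M
    · have := hoff ⟨u, huM⟩ (Fin.ne_of_val_ne hu)
      rw [← Fin.val_inj] at this
      simpa only [← digit_finFunctionFinEquiv] using this
    · rw [digit_eq_zero (Fin.is_lt _) (not_lt.1 huM), digit_eq_zero (Fin.is_lt _) (not_lt.1 huM)]

end Encoding

section Bridge

variable {F : Type*} {M g s : ℕ}

/-- The element `λ` attached to node `m` and digit `c`. -/
def nodeParam (lam : ℕ → F) (m : Fin M × Fin g) (c : Fin s) : F :=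
  lam (finProdFinEquiv (finProdFinEquiv m, c))

/-- The word `(C_0, …, C_{n-1})` with nodes and entries indexed by pairs and digit strings. -/
def nodeWord (C : ℕ → ℕ → F) (m : Fin M × Fin g) (f : Fin M → Fin s) : F :=
  C (finProdFinEquiv m) (finFunctionFinEquiv f)

lemma uncurry_nodeParam_injective {lam : ℕ → F}
    (hdist : ∀ i < M * g * s, ∀ j < M * g * s, lam i = lam j → i = j) :
    Function.Injective (Function.uncurry (nodeParam (M := M) (g := g) (s := s) lam)) := by
  rintro ⟨m, c⟩ ⟨m', c'⟩ h
  simpa using Fin.ext (hdist _ (Fin.is_lt _) _ (Fin.is_lt _) h)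

variable [Field F]

lemma Aent_finFunctionFinEquiv (lam : ℕ → F) (m : Fin M × Fin g) (f h : Fin M → Fin s) (z : ℕ) :
    Aent lam s g m.1 m.2 (finFunctionFinEquiv f) (finFunctionFinEquiv h) z =
      if ∀ u, u ≠ m.1 → f u = h u then
        (signMatrix F s m.2 * Matrix.diagonal (nodeParam lam m) ^ z : Matrix (Fin s) (Fin s) F)
          (f m.1) (h m.1)
      else 0 := by
  have hparam :
      lam (m.1 * s * g + m.2 * s + h m.1) = nodeParam lam m (h m.1) := by
    simp only [nodeParam, finProdFinEquiv_apply_val]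
    ring_nf
  simp only [Aent, digit_finFunctionFinEquiv, digit_finFunctionFinEquiv_eq_off, hparam, Fin.val_inj,
    EmbeddingLike.apply_eq_iff_eq, Matrix.diagonal_pow, Matrix.mul_diagonal, signMatrix,
    Matrix.of_apply]
  by_cases hoff : ∀ u, u ≠ m.1 → f u = h u
  · have hfh : f = h ↔ f m.1 = h m.1 := by
      refine ⟨fun hfh => hfh ▸ rfl, fun hm => funext fun u => ?_⟩
      by_cases hu : u = m.1
      · rw [hu, hm]
      · exact hoff u hu
    by_cases hm : f m.1 = h m.1
    · rw [if_pos (hfh.2 hm), if_pos hoff, if_pos hm, one_mul, Pi.pow_apply]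
    · by_cases hq : (f m.1 : ℕ) = m.2
      · have hq' : (h m.1 : ℕ) ≠ m.2 := fun hq' => hm (Fin.ext (hq.trans hq'.symm))
        simp [hfh, hm, hq, hq']
      · simp [hfh, hm, hq]
  · have hfh : f ≠ h := by
      rintro rfl
      exact hoff fun _ _ => rfl
    simp [hoff, hfh]

lemma sum_Aent (lam : ℕ → F) (m : Fin M × Fin g) (f : Fin M → Fin s) (z : ℕ)
    (y : Fin (s ^ M) → F) :
    ∑ j : Fin (s ^ M), Aent lam s g m.1 m.2 (finFunctionFinEquiv f) j z * y j =
      nodeSign F s m ((nodeEval (nodeParam lam) m ^ z) (y ∘ finFunctionFinEquiv)) f := by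
  rw [← finFunctionFinEquiv.sum_comp, nodeSign_nodeEval_pow, ← sum_ite_eq_digitAct]
  simp only [Aent_finFunctionFinEquiv, Function.comp_apply]
  -- the two sides differ only in their decidability instances
  congr!

lemma InCode.syndrome_eq_zero {lam : ℕ → F} {r : ℕ} {C : ℕ → ℕ → F}
    (hC : InCode lam s g (s ^ M) r (M * g) C) {z : ℕ} (hz : z < r) :
    syndrome (nodeSign F s) (nodeEval (nodeParam lam)) Finset.univ z
      (nodeWord (M := M) (g := g) C) = 0 := by
  ext f
  let ρ : Fin (s ^ M * r) := finProdFinEquiv (finFunctionFinEquiv f, ⟨z, hz⟩)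
  have hρ := hC ρ ρ.is_lt
  rw [finProdFinEquiv_div, finProdFinEquiv_mod, Finset.sum_range,
    ← finProdFinEquiv.sum_comp] at hρ
  simp only [finProdFinEquiv_div, finProdFinEquiv_mod, Finset.sum_range] at hρ
  rw [syndrome_apply, Finset.sum_apply]
  refine Eq.trans (Finset.sum_congr rfl fun m _ => ?_) hρ
  rw [sum_Aent lam m f z fun j => C (finProdFinEquiv m) j]
  rfl

/-- The columns of `A_{a,B}` as pairs of a position in `B` and an inner column. -/
def columnEquiv (v ℓ : ℕ) : Fin v × Fin ℓ ≃ Fin (ℓ * v) :=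
  finProdFinEquiv.trans (finCongr (mul_comm v ℓ))

lemma columnEquiv_div {v ℓ : ℕ} (x : Fin v × Fin ℓ) : (columnEquiv v ℓ x : ℕ) / ℓ = x.1 :=
  finProdFinEquiv_div x

lemma columnEquiv_mod {v ℓ : ℕ} (x : Fin v × Fin ℓ) : (columnEquiv v ℓ x : ℕ) % ℓ = x.2 :=
  finProdFinEquiv_mod x

lemma sum_enum_Aent (lam : ℕ → F) (p : Fin M) {v : ℕ} (B : Finset (Fin g))
    (hv : B.card = v) (x : Fin v → (Fin M → Fin s) → F) (f : Fin M → Fin s) (z : ℕ) :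
    ∑ q : Fin v, ∑ j : Fin (s ^ M), Aent lam s g p (enum (B.map Fin.valEmbedding) q)
        (finFunctionFinEquiv f) j z * x q (finFunctionFinEquiv.symm j) =
      syndrome (fun q => nodeSign F s (p, B.orderEmbOfFin hv q))
        (fun q => nodeEval (nodeParam lam) (p, B.orderEmbOfFin hv q)) Finset.univ z x f := by
  rw [syndrome_apply, Finset.sum_apply]
  refine Finset.sum_congr rfl fun q _ => ?_
  rw [enum_map_valEmbedding B hv]
  refine (sum_Aent lam (p, B.orderEmbOfFin hv q) f z (x q ∘ finFunctionFinEquiv.symm)).trans ?_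
  rw [Function.comp_assoc, Equiv.symm_comp_self, Function.comp_id]

theorem LocalConstraints.syndromeInjective {lam : ℕ → F}
    (hloc : LocalConstraints lam s g (s ^ M) M) (p : Fin M) (B : Finset (Fin g)) :
    SyndromeInjective (fun q => nodeSign F s (p, q)) (fun q => nodeEval (nodeParam lam) (p, q))
      B := by
  rcases B.eq_empty_or_nonempty with rfl | hB
  · exact syndromeInjective_of_subsingleton (by simp) (by simp)
  let B' := B.map Fin.valEmbedding
  have hv : B.card = B'.card := (Finset.card_map _).symm
  have hrange : B' ⊆ Finset.range g := fun q hq => by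
    obtain ⟨q, -, rfl⟩ := Finset.mem_map.1 hq
    exact Finset.mem_range.2 q.is_lt
  have hdet := hloc p p.is_lt B' hrange hB.map
  rw [← Finset.map_orderEmbOfFin_univ B hv]
  refine SyndromeInjective.map _ fun x hx => ?_
  have hker : (fun κ => x ((columnEquiv _ _).symm κ).1
      (finFunctionFinEquiv.symm ((columnEquiv _ _).symm κ).2)) = 0 := by
    refine Matrix.eq_zero_of_mulVec_eq_zero hdet (funext fun ρ => ?_)
    obtain ⟨⟨i, z⟩, rfl⟩ := finProdFinEquiv.surjective ρ
    obtain ⟨f, rfl⟩ := finFunctionFinEquiv.surjective i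
    rw [Matrix.mulVec, dotProduct, ← (columnEquiv _ _).sum_comp, Fintype.sum_prod_type]
    simp only [AmatB, Matrix.of_apply, finProdFinEquiv_div, finProdFinEquiv_mod, columnEquiv_div,
      columnEquiv_mod, Equiv.symm_apply_apply]
    rw [sum_enum_Aent lam p B hv]
    exact congrFun (hx z (by simp)) f
  intro q _
  ext f
  simpa using congrFun hker (columnEquiv _ _ (q, finFunctionFinEquiv f))

end Bridge

theorem statement14_general {F : Type*} [Field F] {M g s r : ℕ} {lam : ℕ → F}
    (hdist : ∀ i < M * g * s, ∀ j < M * g * s, lam i = lam j → i = j)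
    (hloc : LocalConstraints lam s g (s ^ M) M) {a b : ℕ} (ha : a < M) (hbg : b < g) (hbs : b < s)
    {H : Finset ℕ} (hHsub : H ⊆ Finset.range (M * g)) (hHnotin : a * g + b ∉ H)
    (hHcard : M * g + s ≤ r + H.card + 1) {C C' : ℕ → ℕ → F}
    (hC : InCode lam s g (s ^ M) r (M * g) C) (hC' : InCode lam s g (s ^ M) r (M * g) C')
    (hagree : ∀ j ∈ H, ∀ i < s ^ M, digit s i a = b → C j i = C' j i) :
    ∀ i < s ^ M, C (a * g + b) i = C' (a * g + b) i := by
  let m₀ : Fin M × Fin g := (⟨a, ha⟩, ⟨b, hbg⟩)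
  let index (m : Fin M × Fin g) : ℕ := finProdFinEquiv m
  have hm₀ : index m₀ = a * g + b := by simp [index, m₀, mul_comm, add_comm]
  let H' : Finset (Fin M × Fin g) :=
    H.preimage index (Fin.val_injective.comp finProdFinEquiv.injective).injOn
  have hH' : H'.card = H.card := by
    classical
    rw [Finset.card_preimage, Finset.filter_true_of_mem]
    intro j hj
    obtain ⟨m, hm⟩ := finProdFinEquiv.surjective ⟨j, Finset.mem_range.1 (hHsub hj)⟩
    exact ⟨m, congrArg Fin.val hm⟩
  have hm₀H' : m₀ ∉ H' := by rwa [Finset.mem_preimage, hm₀]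
  let Y : Fin M × Fin g → (Fin M → Fin s) → F := nodeWord C - nodeWord C'
  have hY : ∀ z < r, syndrome (nodeSign F s) (nodeEval (nodeParam lam)) Finset.univ z Y = 0 := by
    intro z hz
    rw [map_sub, hC.syndrome_eq_zero hz, hC'.syndrome_eq_zero hz, sub_zero]
  have hhelper : ∀ m ∈ H', restrictDigit m₀.1 ⟨b, hbs⟩ (Y m) = 0 := by
    intro m hm
    ext f
    refine sub_eq_zero.2 (hagree _ (Finset.mem_preimage.1 hm) _ (Fin.is_lt _) ?_)
    exact (digit_finFunctionFinEquiv _ m₀.1).trans (by simp)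
  have hzero := eq_zero_of_restrictDigit_eq_zero (nodeParam lam)
    (uncurry_nodeParam_injective hdist) hloc.syndromeInjective rfl hm₀H' (by rwa [hH']) hY
    hhelper
  intro i hi
  have hi₀ := congrFun hzero (finFunctionFinEquiv.symm ⟨i, hi⟩)
  rw [← hm₀]
  simpa only [Y, nodeWord, Pi.sub_apply, Equiv.apply_symm_apply, Pi.zero_apply, sub_eq_zero]
    using hi₀

/-- optimal-access repair of the first `s` nodes of a group, second
construction, group size `s+1`: if two codewords agree, for every helper node `j ∈ H`
(`|H| = d`, `a(s+1)+b ∉ H`), on all symbols `C_j(i)` with `i_a = b` (`b < s`), then they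
agree on the whole node `a(s+1)+b`. -/
theorem statement14 (F : Type*) [Field F] [Fintype F] (n k d s ℓ r : ℕ)
    (hk : 1 ≤ k) (hkn : k < n) (hd₁ : k + 1 ≤ d) (hd₂ : d ≤ n - 1)
    (hs : s = d - k + 1) (hdiv : (s + 1) ∣ n) (hℓ : ℓ = s ^ (n / (s + 1))) (hr : r = n - k)
    (lam : ℕ → F)
    (hdist : ∀ i < n * s, ∀ j < n * s, lam i = lam j → i = j)
    (hloc : LocalConstraints lam s (s + 1) ℓ (n / (s + 1)))
    (a b : ℕ) (ha : a < n / (s + 1)) (hb : b < s)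
    (H : Finset ℕ) (hHsub : H ⊆ Finset.range n) (hHnotin : a * (s + 1) + b ∉ H)
    (hHcard : H.card = d)
    (C C' : ℕ → ℕ → F)
    (hC : InCode lam s (s + 1) ℓ r n C) (hC' : InCode lam s (s + 1) ℓ r n C')
    (hagree : ∀ j ∈ H, ∀ i < ℓ, digit s i a = b → C j i = C' j i) :
    ∀ i < ℓ, C (a * (s + 1) + b) i = C' (a * (s + 1) + b) i := by
  obtain ⟨M, rfl⟩ := hdiv
  obtain rfl : ℓ = s ^ M := by rw [hℓ, Nat.mul_div_cancel_left M s.succ_pos]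
  rw [Nat.mul_div_cancel_left M s.succ_pos] at hloc ha
  rw [mul_comm (s + 1) M] at *
  exact statement14_general hdist hloc ha (by omega) hb hHsub hHnotin (by omega) hC hC' hagree
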